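/- Fix integers m ≥ 1 and r with 1 ≤ r ≤ m. There exists a constant C > 0, independent of M, such that for every integer M ≥ 2 and every m-times continuously differentiable function f : ℝ → ℝ, the truncated Legendre series L_{M−1}(f) satisfies ‖f − L_{M−1}(f)‖_{H^r(−1,1)} ≤ C (M−1)^{2r−1/2−m} |f|_{H^{m,M−1}(−1,1)}, where ‖g‖_{H^r(−1,1)} = (Σ_{j=0}^{r} ‖g^{(j)}‖²_{L²(−1,1)})^{1/2}. -/

import Mathlib

/-!
Write `P_n` for the Legendre polynomials, `c_n(f) = ∫ f P_n`, and `E_M f = f - L_{M-1}(f)` for the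
remainder. The whole proof rests on the recurrence `P_{n+2}' = P_n' + (2n+3) P_{n+1}`
(`derivative_leg`) and on the fact that `P_{n+2} - P_n` vanishes at `±1` (`leg_eval_endpoint`).
Integration by parts turns these into
`(2n+3) c_{n+1}(f) = c_n(f') - c_{n+2}(f')` (`legCoef_deriv`),
which already contains the orthogonality relations.

*The `L²` estimate.* By the last identity, the part of `‖f‖²` carried by degree `n+1` is at most
`(M+1)⁻²` times the parts of `‖f'‖²` carried by degrees `n` and `n+2`, for `n ≥ M`. Summing over `n`
and using completeness of the `P_n` (Weierstrass) gives
`(M+1)² ‖E_{M+1} f‖² ≤ 2 ‖E_M f'‖²` (`normSq_legErr_step`), and iterating this `m` times gives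
`‖E_M f‖ = O(M^{-m})` (`normSq_legErr_le`). Each step lowers both `m` and `M` by one, which matches
the way the seminorm `|f|_{H^{m,M-1}}` behaves under differentiation (`semiSq_deriv`), so that small
`M` needs no separate treatment.

*Derivatives.* Differentiation and truncation commute up to two terms:
`(E_{M+1} f)' = E_{M+1} f' + (c_M(f')/2) P_{M+1}' + (c_{M+1}(f')/2) P_M'` (`hasDerivAt_legErr`).
The coefficients are bounded by the `L²` estimate for `f'` through Bessel's inequality, and
`‖P_n^{(j+1)}‖ = O(n^{2j+1})` (`normSq_iterate_derivative_leg`), so induction on the order of the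
derivative finishes the proof (`normSq_iteratedDeriv_step`).

All estimates are proved for squared norms, with denominators cleared and with `M+1` in place of
`M`, so that only natural powers of positive numbers occur before the last step.
-/


open intervalIntegral

/-- The `m`-th Legendre polynomial, via Rodrigues' formula. -/
noncomputable def legendreP (m : ℕ) : ℝ → ℝ :=
  fun x => (1 / ((2 : ℝ) ^ m * (Nat.factorial m : ℝ))) *
    iteratedDeriv m (fun y : ℝ => (y ^ 2 - 1) ^ m) x

/-- The truncated Legendre series `L_{M-1}(f)` of degree `M - 1` on `(-1, 1)`. -/
noncomputable def legTrunc (M : ℕ) (f : ℝ → ℝ) : ℝ → ℝ :=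
  fun x => ∑ m' ∈ Finset.range M,
    ((2 * (m' : ℝ) + 1) / 2) * (∫ t in (-1 : ℝ)..1, f t * legendreP m' t) * legendreP m' x

/-- The seminorm `|f|_{H^{m,M-1}(-1,1)}`. -/
noncomputable def legSemiNorm (m M : ℕ) (f : ℝ → ℝ) : ℝ :=
  Real.sqrt (∑ j ∈ Finset.Icc (min m M) m,
    ∫ x in (-1 : ℝ)..1, (iteratedDeriv j f x) ^ 2)

open Polynomial

/-! ### Legendre polynomials: recurrence and endpoint values -/

/-- The `n`-th Legendre polynomial as an element of `ℝ[X]`. -/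
noncomputable def leg (n : ℕ) : ℝ[X] :=
  C (1 / ((2 : ℝ) ^ n * (Nat.factorial n : ℝ))) * derivative^[n] ((X ^ 2 - 1) ^ n)

lemma contDiff_eval (p : ℝ[X]) (k : WithTop ℕ∞) : ContDiff ℝ k (fun x => p.eval x) := by
  simpa using p.contDiff_aeval (𝕜 := ℝ) (n := k)

lemma iteratedDeriv_eval (p : ℝ[X]) (j : ℕ) :
    iteratedDeriv j (fun x => p.eval x) = fun x => (derivative^[j] p).eval x := by
  induction j generalizing p with
  | zero => simp
  | succ j ih =>
    rw [iteratedDeriv_succ', show deriv (fun x => p.eval x) = fun x => (derivative p).eval x from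
      funext fun x => p.deriv, ih, Function.iterate_succ_apply]

lemma legendreP_eq (n : ℕ) : legendreP n = fun x => (leg n).eval x := by
  have h : (fun y : ℝ => (y ^ 2 - 1) ^ n) = fun y => ((X ^ 2 - 1 : ℝ[X]) ^ n).eval y := by
    ext y; simp
  ext x
  simp only [legendreP, leg, eval_mul, eval_C]
  rw [h, iteratedDeriv_eval]

lemma leg_zero : leg 0 = 1 := by simp [leg]

lemma leg_one : leg 1 = X := by
  simp only [leg, Function.iterate_one, pow_one, derivative_sub, derivative_X_pow, derivative_one]
  rw [show (C (((2 : ℕ) : ℝ)) : ℝ[X]) = C 2 by norm_num]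
  simp only [sub_zero, Nat.add_one_sub_one, pow_one, ← mul_assoc, ← C_mul]
  norm_num

/-- The identity `D² wⁿ⁺² = 2(n+2)(2n+3) wⁿ⁺¹ + 4(n+2)(n+1) wⁿ` for `w = X² - 1`, which is
responsible for the derivative recurrence of the Legendre polynomials. -/
lemma deriv_two_pow (n : ℕ) :
    derivative (derivative ((X ^ 2 - 1 : ℝ[X]) ^ (n + 2))) =
      C (2 * ((n : ℝ) + 2) * (2 * n + 3)) * (X ^ 2 - 1) ^ (n + 1)
        + C (4 * ((n : ℝ) + 2) * (n + 1)) * (X ^ 2 - 1) ^ n := by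
  simp only [derivative_pow, derivative_mul, derivative_sub, derivative_X, derivative_one,
    Nat.cast_add, Nat.cast_one, Nat.cast_ofNat, map_mul, map_add, map_natCast,
    map_ofNat, map_one, derivative_natCast, derivative_ofNat, derivative_zero,
    Nat.add_one_sub_one, show n + 2 - 1 = n + 1 from rfl]
  ring

lemma leg_succ_succ (n : ℕ) :
    leg (n + 2) = leg n +
      C ((2 * (n : ℝ) + 3) / (2 ^ (n + 1) * (Nat.factorial (n + 1) : ℝ))) *
        derivative^[n] ((X ^ 2 - 1) ^ (n + 1)) := by
  have h0 : (Nat.factorial n : ℝ) ≠ 0 := by positivity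
  have h1 : 1 / ((2 : ℝ) ^ (n + 2) * (Nat.factorial (n + 2) : ℝ)) *
      (4 * ((n : ℝ) + 2) * (n + 1)) = 1 / (2 ^ n * (Nat.factorial n : ℝ)) := by
    push_cast [Nat.factorial_succ]
    field_simp
    ring
  have h2 : 1 / ((2 : ℝ) ^ (n + 2) * (Nat.factorial (n + 2) : ℝ)) *
      (2 * ((n : ℝ) + 2) * (2 * n + 3)) =
        (2 * (n : ℝ) + 3) / (2 ^ (n + 1) * (Nat.factorial (n + 1) : ℝ)) := by
    push_cast [Nat.factorial_succ]
    field_simp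
    ring
  rw [leg, Function.iterate_succ_apply, Function.iterate_succ_apply, deriv_two_pow,
    iterate_map_add, iterate_derivative_C_mul, iterate_derivative_C_mul, leg, mul_add,
    ← mul_assoc, ← mul_assoc, ← C_mul, ← C_mul, add_comm, h1, h2]

lemma derivative_leg (n : ℕ) :
    derivative (leg (n + 2)) = derivative (leg n) + C (2 * (n : ℝ) + 3) * leg (n + 1) := by
  rw [leg_succ_succ, derivative_add, derivative_C_mul, ← Function.iterate_succ_apply' derivative,
    leg.eq_1 (n + 1), ← mul_assoc, ← C_mul, mul_one_div]

lemma derivative_leg_one : derivative (leg 1) = leg 0 := by simp [leg_zero, leg_one]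

/-- Consecutive Legendre polynomials of the same parity agree at the two endpoints. -/
lemma leg_eval_endpoint (n : ℕ) {x : ℝ} (hx : x ^ 2 - 1 = 0) :
    (leg (n + 2)).eval x = (leg n).eval x := by
  obtain ⟨q, hq⟩ : (X ^ 2 - 1 : ℝ[X]) ∣ derivative^[n] ((X ^ 2 - 1) ^ (n + 1)) := by
    have := pow_sub_dvd_iterate_derivative_pow (X ^ 2 - 1 : ℝ[X]) (n + 1) n
    simpa using this
  rw [leg_succ_succ, hq]
  simp [hx]

lemma natDegree_leg_le (n : ℕ) : (leg n).natDegree ≤ n := by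
  refine (natDegree_C_mul_le _ _).trans ((natDegree_iterate_derivative _ _).trans ?_)
  have h : ((X ^ 2 - 1 : ℝ[X]) ^ n).natDegree ≤ n * 2 := by
    refine natDegree_pow_le_of_le n ?_
    compute_degree
  omega

/-! ### Legendre coefficients and orthogonality -/

/-- The (unnormalised) Legendre coefficient `∫ f P_n` of `f`. -/
noncomputable def legCoef (f : ℝ → ℝ) (n : ℕ) : ℝ := ∫ t in (-1 : ℝ)..1, f t * legendreP n t

lemma continuous_legendreP (n : ℕ) : Continuous (legendreP n) := by
  rw [legendreP_eq]; exact (leg n).continuous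

/-- Integrating `f'` against `P_{n+2} - P_n`, which vanishes at both endpoints and has derivative
`(2n+3) P_{n+1}`. -/
lemma legCoef_deriv {f : ℝ → ℝ} (hf : ContDiff ℝ 1 f) (n : ℕ) :
    (2 * (n : ℝ) + 3) * legCoef f (n + 1) = legCoef (deriv f) n - legCoef (deriv f) (n + 2) := by
  have hc : Continuous (deriv f) := hf.continuous_deriv_one
  have hi : ∀ g : ℝ → ℝ, Continuous g → IntervalIntegrable g MeasureTheory.volume (-1) 1 :=
    fun g hg => hg.intervalIntegrable _ _
  have key := integral_mul_deriv_eq_deriv_mul (a := (-1 : ℝ)) (b := 1) (u := f) (u' := deriv f)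
    (v := fun x => (leg (n + 2) - leg n).eval x)
    (v' := fun x => (C (2 * (n : ℝ) + 3) * leg (n + 1)).eval x)
    (fun x _ => (hf.differentiable one_ne_zero x).hasDerivAt)
    (fun x _ => by
      have h := (leg (n + 2) - leg n).hasDerivAt x
      rwa [derivative_sub, derivative_leg, add_sub_cancel_left] at h)
    (hi _ hc) (hi _ (by fun_prop))
  simp only [legCoef, legendreP_eq]
  rw [eval_sub, eval_sub, leg_eval_endpoint n (by norm_num : (1 : ℝ) ^ 2 - 1 = 0),
    leg_eval_endpoint n (by norm_num : (-1 : ℝ) ^ 2 - 1 = 0)] at key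
  rw [← intervalIntegral.integral_const_mul, ← intervalIntegral.integral_sub
    (hi _ (by fun_prop)) (hi _ (by fun_prop))]
  simp only [eval_mul, eval_C, eval_sub, sub_self, mul_zero, zero_sub] at key
  rw [← intervalIntegral.integral_neg] at key
  calc _ = _ := intervalIntegral.integral_congr fun x _ => by ring
    _ = _ := key
    _ = _ := intervalIntegral.integral_congr fun x _ => by ring

/-- `P_n` is orthogonal to polynomials of lower degree: by `legCoef_deriv`, the claim for `p` follows
from the claim for `p'`. -/
lemma legCoef_poly_lt (p : ℝ[X]) (n : ℕ) (h : p.natDegree < n) :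
    legCoef (fun x => p.eval x) n = 0 := by
  induction hd : p.natDegree using Nat.strong_induction_on generalizing p n with
  | _ d ih =>
    obtain ⟨k, rfl⟩ : ∃ k, n = k + 1 := ⟨n - 1, by omega⟩
    have hr := legCoef_deriv (f := fun x => p.eval x) (contDiff_eval p _) k
    have hp : deriv (fun x => p.eval x) = fun x => (derivative p).eval x :=
      funext fun x => p.deriv
    have h3 : (2 * (k : ℝ) + 3) ≠ 0 := by positivity
    refine (mul_eq_zero.1 (hr.trans ?_)).resolve_left h3
    rw [hp]
    rcases Nat.eq_zero_or_pos p.natDegree with h0 | h0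
    · rw [natDegree_eq_zero.1 h0 |>.choose_spec.symm]
      simp [legCoef]
    · have hlt : (derivative p).natDegree < p.natDegree := natDegree_derivative_lt h0.ne'
      rw [ih _ (hd ▸ hlt) _ k (by omega) rfl, ih _ (hd ▸ hlt) _ (k + 2) (by omega) rfl, sub_self]

lemma legCoef_add {f g : ℝ → ℝ} (hf : Continuous f) (hg : Continuous g) (n : ℕ) :
    legCoef (fun x => f x + g x) n = legCoef f n + legCoef g n := by
  have := continuous_legendreP n
  rw [legCoef, legCoef, legCoef, ← intervalIntegral.integral_add
    (Continuous.intervalIntegrable (by fun_prop) _ _)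
    (Continuous.intervalIntegrable (by fun_prop) _ _)]
  simp only [add_mul]

lemma legCoef_const_mul (c : ℝ) (f : ℝ → ℝ) (n : ℕ) :
    legCoef (fun x => c * f x) n = c * legCoef f n := by
  simp only [legCoef, mul_assoc, intervalIntegral.integral_const_mul]

lemma legCoef_legendreP_self (n : ℕ) : legCoef (legendreP n) n = 2 / (2 * n + 1) := by
  have hc := continuous_legendreP
  -- Integrating by parts, `(2n+3) ⟪P_{n+1}, P_{n+1}⟫ = ⟪P_{n+1}', P_n⟫ = (2n+1) ⟪P_n, P_n⟫`.
  have hd : ∀ n, legCoef (deriv (legendreP (n + 1))) n = (2 * n + 1) * legCoef (legendreP n) n := by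
    intro n
    have h1 : deriv (legendreP (n + 1)) = fun x => (derivative (leg (n + 1))).eval x := by
      rw [legendreP_eq]; exact funext fun x => (leg _).deriv
    rw [h1]
    cases n with
    | zero => rw [derivative_leg_one, legendreP_eq]; simp
    | succ k =>
      rw [derivative_leg]
      simp only [eval_add, eval_mul, eval_C]
      rw [legCoef_add (by fun_prop) (by fun_prop), legCoef_const_mul, legendreP_eq,
        legCoef_poly_lt, zero_add]
      · push_cast; ring
      · have h2 := natDegree_leg_le k
        have h3 := natDegree_derivative_le (leg k)
        omega
  induction n with
  | zero => simp [legCoef, legendreP_eq, leg_zero]; norm_num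
  | succ n ih =>
    have hr := legCoef_deriv (f := legendreP (n + 1))
      (by rw [legendreP_eq]; exact contDiff_eval _ _) n
    rw [hd, ih, show deriv (legendreP (n + 1)) = fun x => (derivative (leg (n + 1))).eval x by
      rw [legendreP_eq]; exact funext fun x => (leg _).deriv, legCoef_poly_lt, sub_zero] at hr
    · have : (2 * (n : ℝ) + 1) ≠ 0 := by positivity
      have : (2 * (n : ℝ) + 3) ≠ 0 := by positivity
      push_cast
      rw [show (2 * ((n : ℝ) + 1) + 1) = 2 * n + 3 by ring]
      field_simp at hr ⊢
      linarith
    · have h2 := natDegree_leg_le (n + 1)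
      have h3 := natDegree_derivative_le (leg (n + 1))
      omega

lemma legCoef_legendreP_of_ne {i n : ℕ} (h : i ≠ n) : legCoef (legendreP i) n = 0 := by
  rcases lt_or_gt_of_ne h with h | h
  · rw [legendreP_eq]; exact legCoef_poly_lt _ _ ((natDegree_leg_le i).trans_lt h)
  · have := legCoef_poly_lt (leg n) i ((natDegree_leg_le n).trans_lt h)
    rw [← legendreP_eq] at this
    simpa only [legCoef, mul_comm] using this

/-- `P_n` has degree exactly `n`, since otherwise it would be orthogonal to itself. -/
lemma degree_leg (n : ℕ) : (leg n).degree = n := by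
  have h : ¬ (leg n).natDegree < n := fun h => by
    have h1 := legCoef_poly_lt _ _ h
    rw [← legendreP_eq, legCoef_legendreP_self] at h1
    exact absurd h1 (by positivity)
  have h0 : leg n ≠ 0 := fun h0 => by
    have h1 := legCoef_legendreP_self n
    rw [legendreP_eq, h0] at h1
    simp only [legCoef, eval_zero, zero_mul, intervalIntegral.integral_zero] at h1
    exact absurd h1.symm (by positivity)
  rw [degree_eq_natDegree h0]
  have := natDegree_leg_le n
  congr 1; omega

lemma span_leg : Submodule.span ℝ (Set.range leg) = ⊤ :=
  Polynomial.Sequence.span (⟨leg, degree_leg⟩ : Polynomial.Sequence ℝ) fun i =>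
    (leadingCoeff_ne_zero.2 (Polynomial.Sequence.ne_zero _ i)).isUnit

/-! ### Bessel's inequality and completeness -/

/-- The remainder `f - L_{M-1}(f)` of the truncated Legendre series. -/
noncomputable def legErr (M : ℕ) (f : ℝ → ℝ) : ℝ → ℝ := fun t => f t - legTrunc M f t

/-- The squared norm of `f` in `L²(-1, 1)`. -/
noncomputable def normSq (f : ℝ → ℝ) : ℝ := ∫ x in (-1 : ℝ)..1, (f x) ^ 2

/-- The contribution `(2n+1)/2 · ⟪f, P_n⟫²` of degree `n` to the squared `L²` norm of `f`. -/
noncomputable def legEnergy (f : ℝ → ℝ) (n : ℕ) : ℝ := (2 * (n : ℝ) + 1) / 2 * legCoef f n ^ 2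

lemma normSq_nonneg (f : ℝ → ℝ) : 0 ≤ normSq f :=
  intervalIntegral.integral_nonneg (by norm_num) fun _ _ => sq_nonneg _

lemma legEnergy_nonneg (f : ℝ → ℝ) (n : ℕ) : 0 ≤ legEnergy f n := by
  unfold legEnergy; positivity

lemma integrable_of_cont {g : ℝ → ℝ} (hg : Continuous g) :
    IntervalIntegrable g MeasureTheory.volume (-1) 1 := hg.intervalIntegrable _ _

lemma normSq_const_mul (c : ℝ) (f : ℝ → ℝ) : normSq (fun x => c * f x) = c ^ 2 * normSq f := by
  simp only [normSq, mul_pow, intervalIntegral.integral_const_mul]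

lemma normSq_mono {f g : ℝ → ℝ} (hf : Continuous f) (hg : Continuous g)
    (h : ∀ x ∈ Set.Icc (-1 : ℝ) 1, f x ^ 2 ≤ g x ^ 2) : normSq f ≤ normSq g :=
  intervalIntegral.integral_mono_on (by norm_num) (integrable_of_cont (by fun_prop))
    (integrable_of_cont (by fun_prop)) h

lemma normSq_add_three_le {f g h : ℝ → ℝ} (hf : Continuous f) (hg : Continuous g)
    (hh : Continuous h) :
    normSq (fun x => f x + g x + h x) ≤ 3 * (normSq f + normSq g + normSq h) := by
  unfold normSq
  rw [← intervalIntegral.integral_add (integrable_of_cont (by fun_prop))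
      (integrable_of_cont (by fun_prop)),
    ← intervalIntegral.integral_add (integrable_of_cont (by fun_prop))
      (integrable_of_cont (by fun_prop)), ← intervalIntegral.integral_const_mul]
  refine intervalIntegral.integral_mono_on (by norm_num) (integrable_of_cont (by fun_prop))
    (integrable_of_cont (by fun_prop)) fun x _ => ?_
  nlinarith [sq_nonneg (f x - g x), sq_nonneg (f x - h x), sq_nonneg (g x - h x)]

lemma legTrunc_eq (M : ℕ) (f : ℝ → ℝ) (x : ℝ) : legTrunc M f x =
    ∑ i ∈ Finset.range M, ((2 * (i : ℝ) + 1) / 2) * legCoef f i * legendreP i x := rfl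

lemma continuous_legTrunc (M : ℕ) (f : ℝ → ℝ) : Continuous (legTrunc M f) := by
  have := continuous_legendreP
  unfold legTrunc; fun_prop

lemma continuous_legErr (M : ℕ) {f : ℝ → ℝ} (hf : Continuous f) : Continuous (legErr M f) :=
  hf.sub (continuous_legTrunc M f)

lemma legErr_zero (f : ℝ → ℝ) : legErr 0 f = f := by ext; simp [legErr, legTrunc]

lemma legErr_succ (M : ℕ) (f : ℝ → ℝ) : legErr (M + 1) f =
    fun x => legErr M f x + -((2 * (M : ℝ) + 1) / 2 * legCoef f M) * legendreP M x := by
  ext x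
  simp only [legErr, legTrunc_eq, Finset.sum_range_succ]
  ring

lemma legCoef_legErr {f : ℝ → ℝ} (hf : Continuous f) {M n : ℕ} (h : M ≤ n) :
    legCoef (legErr M f) n = legCoef f n := by
  have := continuous_legendreP
  induction M with
  | zero => rw [legErr_zero]
  | succ M ih =>
    rw [legErr_succ, legCoef_add (continuous_legErr M hf) (by fun_prop), legCoef_const_mul,
      legCoef_legendreP_of_ne (by omega), ih (by omega), mul_zero, add_zero]

lemma normSq_add {f g : ℝ → ℝ} (hf : Continuous f) (hg : Continuous g) :
    normSq (fun x => f x + g x) = normSq f + 2 * (∫ x in (-1 : ℝ)..1, f x * g x) + normSq g := by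
  unfold normSq
  rw [← intervalIntegral.integral_const_mul, ← intervalIntegral.integral_add
      (integrable_of_cont (by fun_prop)) (integrable_of_cont (by fun_prop)),
    ← intervalIntegral.integral_add
      (integrable_of_cont (by fun_prop)) (integrable_of_cont (by fun_prop))]
  exact intervalIntegral.integral_congr fun x _ => by ring

lemma normSq_legendreP (n : ℕ) : normSq (legendreP n) = 2 / (2 * n + 1) := by
  rw [← legCoef_legendreP_self]; simp only [normSq, legCoef, sq]

lemma normSq_legErr_succ {f : ℝ → ℝ} (hf : Continuous f) (M : ℕ) :
    normSq (legErr (M + 1) f) = normSq (legErr M f) - legEnergy f M := by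
  have hc := continuous_legendreP
  have hE := continuous_legErr M hf
  rw [legErr_succ, normSq_add hE (by fun_prop), normSq_const_mul, normSq_legendreP]
  have : (∫ x in (-1 : ℝ)..1,
      legErr M f x * (-((2 * (M : ℝ) + 1) / 2 * legCoef f M) * legendreP M x)) =
      -((2 * (M : ℝ) + 1) / 2 * legCoef f M) * legCoef f M := by
    rw [← legCoef_legErr hf le_rfl]
    nth_rewrite 3 [legCoef]
    rw [← intervalIntegral.integral_const_mul]
    exact intervalIntegral.integral_congr fun x _ => by ring
  rw [this, legEnergy]
  have : (2 * (M : ℝ) + 1) ≠ 0 := by positivity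
  field_simp
  ring

lemma normSq_legErr_add {f : ℝ → ℝ} (hf : Continuous f) (M k : ℕ) :
    normSq (legErr M f) =
      ∑ i ∈ Finset.range k, legEnergy f (M + i) + normSq (legErr (M + k) f) := by
  induction k with
  | zero => simp
  | succ k ih =>
    rw [Finset.sum_range_succ, ← add_assoc M, normSq_legErr_succ hf, ih]; ring

/-- Bessel's inequality for the Legendre coefficients of degree at least `M`. -/
lemma sum_legEnergy_le {f : ℝ → ℝ} (hf : Continuous f) (M k : ℕ) :
    ∑ i ∈ Finset.range k, legEnergy f (M + i) ≤ normSq (legErr M f) := by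
  rw [normSq_legErr_add hf M k]
  linarith [normSq_nonneg (legErr (M + k) f)]

lemma normSq_legErr_anti {f : ℝ → ℝ} (hf : Continuous f) {M N : ℕ} (h : M ≤ N) :
    normSq (legErr N f) ≤ normSq (legErr M f) := by
  obtain ⟨k, rfl⟩ := Nat.exists_eq_add_of_le h
  rw [normSq_legErr_add hf M k]
  linarith [Finset.sum_nonneg fun i (_ : i ∈ Finset.range k) => legEnergy_nonneg f (M + i)]

lemma legEnergy_le {f : ℝ → ℝ} (hf : Continuous f) {M n : ℕ} (h : M ≤ n) :
    legEnergy f n ≤ normSq (legErr M f) := by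
  have := sum_legEnergy_le hf n 1
  rw [Finset.sum_range_one, add_zero] at this
  exact this.trans (normSq_legErr_anti hf h)

lemma legErr_add {f g : ℝ → ℝ} (hf : Continuous f) (hg : Continuous g) (M : ℕ) :
    legErr M (fun x => f x + g x) = fun x => legErr M f x + legErr M g x := by
  ext x
  simp only [legErr, legTrunc_eq, legCoef_add hf hg, mul_add, add_mul, Finset.sum_add_distrib]
  ring

lemma legErr_const_mul (c : ℝ) (f : ℝ → ℝ) (M : ℕ) :
    legErr M (fun x => c * f x) = fun x => c * legErr M f x := by
  ext x
  simp only [legErr, legTrunc_eq, legCoef_const_mul, mul_sub, Finset.mul_sum]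
  congr 1
  exact Finset.sum_congr rfl fun i _ => by ring

lemma legErr_legendreP {i M : ℕ} (h : i < M) : legErr M (legendreP i) = fun _ => 0 := by
  ext x
  rw [legErr, legTrunc_eq, Finset.sum_eq_single i
    (fun k _ hk => by rw [legCoef_legendreP_of_ne hk.symm]; ring)
    (fun hi => absurd (Finset.mem_range.2 h) hi), legCoef_legendreP_self]
  have : (2 * (i : ℝ) + 1) ≠ 0 := by positivity
  field_simp
  ring

/-- Truncated Legendre series of sufficiently high degree reproduce polynomials. -/
lemma exists_legErr_poly (p : ℝ[X]) : ∃ K, ∀ M, K ≤ M →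
    legErr M (fun x => p.eval x) = fun _ => 0 := by
  have hp : p ∈ Submodule.span ℝ (Set.range leg) := by rw [span_leg]; trivial
  induction hp using Submodule.span_induction with
  | mem q hq =>
    obtain ⟨i, rfl⟩ := hq
    refine ⟨i + 1, fun M hM => ?_⟩
    rw [← legendreP_eq]; exact legErr_legendreP hM
  | zero => exact ⟨0, fun M _ => by ext; simp [legErr, legTrunc]⟩
  | add p q _ _ hp hq =>
    obtain ⟨K, hK⟩ := hp
    obtain ⟨L, hL⟩ := hq
    refine ⟨max K L, fun M hM => ?_⟩
    simp only [eval_add]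
    rw [legErr_add (by fun_prop) (by fun_prop), hK M (by omega), hL M (by omega)]
    simp
  | smul c p _ hp =>
    obtain ⟨K, hK⟩ := hp
    refine ⟨K, fun M hM => ?_⟩
    simp only [eval_smul, smul_eq_mul]
    rw [legErr_const_mul, hK M hM]
    simp

/-- Completeness of the Legendre polynomials, from the Weierstrass approximation theorem. -/
lemma normSq_legErr_small {f : ℝ → ℝ} (hf : Continuous f) {ε : ℝ} (hε : 0 < ε) :
    ∃ K, ∀ M, K ≤ M → normSq (legErr M f) ≤ ε := by
  obtain ⟨p, hp⟩ := exists_polynomial_near_of_continuousOn (-1) 1 f hf.continuousOn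
    (Real.sqrt (ε / 2)) (by positivity)
  obtain ⟨K, hK⟩ := exists_legErr_poly p
  refine ⟨K, fun M hM => ?_⟩
  have hsplit : f = fun x => (f x - p.eval x) + p.eval x := by ext; ring
  have hc : Continuous fun x => f x - p.eval x := by fun_prop
  rw [hsplit, legErr_add hc (by fun_prop), hK M hM]
  simp only [add_zero]
  calc normSq (legErr M fun x => f x - p.eval x)
      ≤ normSq (legErr 0 fun x => f x - p.eval x) := normSq_legErr_anti hc (Nat.zero_le _)
    _ = normSq (fun x => f x - p.eval x) := by rw [legErr_zero]
    _ ≤ normSq (fun _ => Real.sqrt (ε / 2)) := by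
        refine normSq_mono hc (by fun_prop) fun x hx => ?_
        rw [sq_le_sq, abs_of_nonneg (Real.sqrt_nonneg _), abs_sub_comm]
        exact (hp x hx).le
    _ = ε := by
        simp only [normSq, intervalIntegral.integral_const, smul_eq_mul]
        rw [Real.sq_sqrt (by positivity)]; ring

/-! ### The error estimate in the mean-square norm -/

lemma legEnergy_succ_le {f : ℝ → ℝ} (hf : ContDiff ℝ 1 f) {M n : ℕ} (h : M ≤ n) :
    legEnergy f (n + 1) ≤
      1 / ((M : ℝ) + 1) ^ 2 * (legEnergy (deriv f) n + legEnergy (deriv f) (n + 2)) := by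
  have hr := legCoef_deriv hf n
  have hMn : (M : ℝ) ≤ n := by exact_mod_cast h
  have hn : (0 : ℝ) ≤ M := by positivity
  simp only [legEnergy]
  push_cast
  set a := legCoef (deriv f) n
  set b := legCoef (deriv f) (n + 2)
  set c := legCoef f (n + 1)
  have h3 : (0 : ℝ) < 2 * n + 3 := by linarith
  have h1 : (0 : ℝ) < 2 * n + 1 := by linarith
  have hc : c = (a - b) / (2 * n + 3) := by field_simp; linarith
  have hM2 : ((M : ℝ) + 1) ^ 2 ≤ (2 * n + 3) * (2 * n + 1) / 2 := by nlinarith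
  have hpos : (0 : ℝ) < ((M : ℝ) + 1) ^ 2 := by positivity
  have e1 : (2 * ((n : ℝ) + 1) + 1) / 2 * c ^ 2 = (a - b) ^ 2 / (2 * (2 * n + 3)) := by
    rw [hc]; field_simp; ring
  have e2 : (a - b) ^ 2 / (2 * (2 * n + 3)) ≤ (a ^ 2 + b ^ 2) / (2 * n + 3) := by
    rw [div_le_div_iff₀ (by positivity) h3]
    nlinarith [sq_nonneg (a + b)]
  rw [e1]
  refine e2.trans ?_
  rw [one_div_mul_eq_div, div_le_div_iff₀ h3 hpos]
  have ha := sq_nonneg a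
  have hb := sq_nonneg b
  calc (a ^ 2 + b ^ 2) * ((M : ℝ) + 1) ^ 2
      ≤ (a ^ 2 + b ^ 2) * ((2 * n + 3) * (2 * n + 1) / 2) := by gcongr
    _ ≤ ((2 * (n : ℝ) + 1) / 2 * a ^ 2 + (2 * ((n : ℝ) + 2) + 1) / 2 * b ^ 2) * (2 * n + 3) := by
        nlinarith [mul_nonneg hb h3.le]

/-- One derivative gains one power of `M` in `L²`: sum the bound on the energies over all degrees
and use completeness. -/
lemma normSq_legErr_step {f : ℝ → ℝ} (hf : ContDiff ℝ 1 f) (M : ℕ) :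
    ((M : ℝ) + 1) ^ 2 * normSq (legErr (M + 1) f) ≤ 2 * normSq (legErr M (deriv f)) := by
  have hd : Continuous (deriv f) := hf.continuous_deriv_one
  have hpos : (0 : ℝ) < ((M : ℝ) + 1) ^ 2 := by positivity
  rw [← le_div_iff₀' hpos]
  refine le_of_forall_pos_le_add fun ε hε => ?_
  obtain ⟨K, hK⟩ := normSq_legErr_small hf.continuous hε
  rw [normSq_legErr_add hf.continuous (M + 1) K]
  have h2 : ∑ i ∈ Finset.range K, legEnergy f (M + 1 + i) ≤
      1 / ((M : ℝ) + 1) ^ 2 * (∑ i ∈ Finset.range K, legEnergy (deriv f) (M + i) +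
        ∑ i ∈ Finset.range K, legEnergy (deriv f) (M + 2 + i)) := by
    rw [← Finset.sum_add_distrib, Finset.mul_sum]
    refine Finset.sum_le_sum fun i _ => ?_
    have := legEnergy_succ_le hf (Nat.le_add_right M i)
    rwa [show M + 1 + i = M + i + 1 by ring, show M + 2 + i = M + i + 2 by ring]
  have h3 := sum_legEnergy_le hd M K
  have h4 := (sum_legEnergy_le hd (M + 2) K).trans (normSq_legErr_anti hd (Nat.le_add_right M 2))
  have h5 := hK (M + 1 + K) (by omega)
  refine add_le_add (h2.trans ?_) h5
  rw [one_div_mul_eq_div]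
  gcongr
  linarith

/-- The square of the seminorm `|f|_{H^{m,M-1}(-1,1)}`. -/
noncomputable def semiSq (m M : ℕ) (f : ℝ → ℝ) : ℝ :=
  ∑ j ∈ Finset.Icc (min m M) m, normSq (iteratedDeriv j f)

lemma semiSq_nonneg (m M : ℕ) (f : ℝ → ℝ) : 0 ≤ semiSq m M f :=
  Finset.sum_nonneg fun _ _ => normSq_nonneg _

lemma semiSq_deriv (m M : ℕ) (f : ℝ → ℝ) : semiSq m M (deriv f) = semiSq (m + 1) (M + 1) f := by
  rw [semiSq, semiSq, min_add_add_right, ← Finset.map_add_right_Icc, Finset.sum_map]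
  exact Finset.sum_congr rfl fun j _ => by
    rw [addRightEmbedding_apply, iteratedDeriv_succ']

lemma semiSq_anti (m : ℕ) {M N : ℕ} (h : M ≤ N) (f : ℝ → ℝ) : semiSq m N f ≤ semiSq m M f :=
  Finset.sum_le_sum_of_subset_of_nonneg
    (Finset.Icc_subset_Icc_left (by omega)) fun _ _ _ => normSq_nonneg _

lemma contDiff_deriv_of_succ {m : ℕ} {f : ℝ → ℝ} (hf : ContDiff ℝ (m + 1 : ℕ) f) :
    ContDiff ℝ m (deriv f) := by
  have : ContDiff ℝ ((m : WithTop ℕ∞) + 1) f := by exact_mod_cast hf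
  exact (contDiff_succ_iff_deriv.1 this).2.2

lemma contDiff_one_of_succ {m : ℕ} {f : ℝ → ℝ} (hf : ContDiff ℝ (m + 1 : ℕ) f) :
    ContDiff ℝ 1 f := hf.of_le (by exact_mod_cast Nat.le_add_left 1 m)

/-- The `L²` error estimate, of order `M^{-m}`. -/
lemma normSq_legErr_le (m : ℕ) : ∃ A : ℝ, 0 < A ∧ ∀ (M : ℕ) (f : ℝ → ℝ), ContDiff ℝ m f →
    ((M : ℝ) + 1) ^ (2 * m) * normSq (legErr M f) ≤ A * semiSq m M f := by
  induction m with
  | zero =>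
    refine ⟨1, one_pos, fun M f hf => ?_⟩
    have h := normSq_legErr_anti hf.continuous (Nat.zero_le M)
    rw [legErr_zero] at h
    simpa [semiSq] using h
  | succ m ih =>
    obtain ⟨A, hA, ih⟩ := ih
    refine ⟨4 ^ (m + 1) * 2 * A + 1, by positivity, fun M f hf => ?_⟩
    have hS := semiSq_nonneg (m + 1) M f
    cases M with
    | zero =>
      have h0 : normSq f ≤ semiSq (m + 1) 0 f := by
        have := Finset.single_le_sum (f := fun j => normSq (iteratedDeriv j f))
          (s := Finset.Icc (min (m + 1) 0) (m + 1)) (fun _ _ => normSq_nonneg _)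
          (Finset.mem_Icc.2 ⟨by simp, Nat.zero_le _⟩ : 0 ∈ _)
        simpa [semiSq] using this
      have : 0 ≤ 4 ^ (m + 1) * 2 * A * semiSq (m + 1) 0 f := by positivity
      rw [legErr_zero]
      simp only [Nat.cast_zero, zero_add, one_pow, one_mul]
      linarith
    | succ M =>
      have h1 := normSq_legErr_step (contDiff_one_of_succ hf) M
      have h2 := ih M (deriv f) (contDiff_deriv_of_succ hf)
      rw [semiSq_deriv] at h2
      have h3 : ((M + 1 : ℕ) : ℝ) + 1 ≤ 2 * ((M : ℝ) + 1) := by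
        push_cast; linarith [(Nat.cast_nonneg M : (0 : ℝ) ≤ M)]
      have hn := normSq_nonneg (legErr (M + 1) f)
      calc (((M + 1 : ℕ) : ℝ) + 1) ^ (2 * (m + 1)) * normSq (legErr (M + 1) f)
          ≤ (2 * ((M : ℝ) + 1)) ^ (2 * (m + 1)) * normSq (legErr (M + 1) f) := by gcongr
        _ = 4 ^ (m + 1) * ((M : ℝ) + 1) ^ (2 * m) *
              (((M : ℝ) + 1) ^ 2 * normSq (legErr (M + 1) f)) := by
            rw [mul_pow, pow_mul]; norm_num; ring
        _ ≤ 4 ^ (m + 1) * ((M : ℝ) + 1) ^ (2 * m) * (2 * normSq (legErr M (deriv f))) := by gcongr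
        _ = 4 ^ (m + 1) * 2 * (((M : ℝ) + 1) ^ (2 * m) * normSq (legErr M (deriv f))) := by ring
        _ ≤ 4 ^ (m + 1) * 2 * (A * semiSq (m + 1) (M + 1) f) := by gcongr
        _ ≤ _ := by linarith

/-! ### Growth of the derivatives of the Legendre polynomials -/

/-- `P_n'` is a combination of the lower `P_k` with coefficients at most `2k+1`. -/
lemma exists_derivative_leg (n : ℕ) : ∃ a : ℕ → ℝ, (∀ k, |a k| ≤ 2 * k + 1) ∧
    derivative (leg n) = ∑ k ∈ Finset.range n, C (a k) * leg k := by
  induction n using Nat.twoStepInduction with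
  | zero => exact ⟨0, fun k => by simp; positivity, by simp [leg_zero]⟩
  | one => exact ⟨1, fun k => by simp, by simp [leg_zero, leg_one]⟩
  | more n ih _ =>
    obtain ⟨a, ha, hs⟩ := ih
    refine ⟨fun k => if k < n then a k else if k = n then 0 else 2 * k + 1, fun k => ?_, ?_⟩
    · dsimp only
      split_ifs
      · exact ha k
      · simp; positivity
      · rw [abs_of_nonneg (by positivity)]
    · rw [derivative_leg, hs, Finset.sum_range_succ, Finset.sum_range_succ]
      simp only [lt_irrefl, if_false, if_true, map_zero, zero_mul, add_zero,
        Nat.not_succ_lt_self, Nat.succ_ne_self]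
      congr 1
      · exact Finset.sum_congr rfl fun k hk => by rw [if_pos (Finset.mem_range.1 hk)]
      · push_cast; ring_nf

lemma normSq_sum_le (n : ℕ) (a : ℕ → ℝ) (g : ℕ → ℝ → ℝ) (hg : ∀ i, Continuous (g i)) :
    normSq (fun x => ∑ i ∈ Finset.range n, a i * g i x) ≤
      n * ∑ i ∈ Finset.range n, a i ^ 2 * normSq (g i) := by
  have h : ∑ i ∈ Finset.range n, a i ^ 2 * normSq (g i) =
      ∫ x in (-1 : ℝ)..1, ∑ i ∈ Finset.range n, (a i * g i x) ^ 2 := by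
    rw [intervalIntegral.integral_finsetSum fun i _ => integrable_of_cont (by fun_prop)]
    exact Finset.sum_congr rfl fun i _ => (normSq_const_mul _ _).symm
  rw [h, ← intervalIntegral.integral_const_mul]
  refine intervalIntegral.integral_mono_on (by norm_num) (integrable_of_cont (by fun_prop))
    (integrable_of_cont (by fun_prop)) fun x _ => ?_
  simpa using sq_sum_le_card_mul_sum_sq (s := Finset.range n) (f := fun i => a i * g i x)

lemma normSq_derivative_leg (n : ℕ) :
    normSq (fun x => (derivative (leg n)).eval x) ≤ 2 * (n : ℝ) ^ 2 := by
  induction n using Nat.twoStepInduction with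
  | zero => simp [leg_zero, normSq]
  | one => simp [leg_one, normSq]; norm_num
  | more n ih _ =>
    rw [derivative_leg]
    simp only [eval_add, eval_mul, eval_C]
    rw [normSq_add (by fun_prop) (by fun_prop), normSq_const_mul, ← legendreP_eq,
      normSq_legendreP]
    have h0 : ∫ x in (-1 : ℝ)..1,
        (derivative (leg n)).eval x * ((2 * (n : ℝ) + 3) * legendreP (n + 1) x) = 0 := by
      have h1 := legCoef_poly_lt (derivative (leg n)) (n + 1) (by
        have h2 := natDegree_leg_le n
        have h3 := natDegree_derivative_le (leg n)
        omega)
      rw [legCoef] at h1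
      rw [← mul_zero (2 * (n : ℝ) + 3), ← h1, ← intervalIntegral.integral_const_mul]
      exact intervalIntegral.integral_congr fun x _ => by ring
    simp only [legendreP_eq] at h0
    rw [h0]
    have h3 : (2 * (n : ℝ) + 3) ^ 2 * (2 / (2 * ((n + 1 : ℕ) : ℝ) + 1)) = 2 * (2 * n + 3) := by
      push_cast
      rw [show 2 * ((n : ℝ) + 1) + 1 = 2 * n + 3 by ring]
      have : 2 * (n : ℝ) + 3 ≠ 0 := by positivity
      field_simp
    rw [h3]
    push_cast
    nlinarith

/-- The growth `‖P_n^{(j+1)}‖ = O(n^{2j+1})`, stated for squared norms. -/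
lemma normSq_iterate_derivative_leg (j : ℕ) : ∃ A : ℝ, 0 < A ∧ ∀ n : ℕ,
    normSq (fun x => (derivative^[j + 1] (leg n)).eval x) ≤ A * (n : ℝ) ^ (4 * j + 2) := by
  induction j with
  | zero => exact ⟨2, by norm_num, fun n => by simpa using normSq_derivative_leg n⟩
  | succ j ih =>
    obtain ⟨A, hA, ih⟩ := ih
    refine ⟨4 * A, by positivity, fun n => ?_⟩
    obtain ⟨a, ha, hs⟩ := exists_derivative_leg n
    have e : (fun x => (derivative^[j + 1 + 1] (leg n)).eval x) = fun x =>
        ∑ k ∈ Finset.range n, a k * (derivative^[j + 1] (leg k)).eval x := by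
      ext x
      rw [Function.iterate_succ_apply, hs, iterate_derivative_sum, eval_finsetSum]
      simp only [iterate_derivative_C_mul, eval_mul, eval_C]
    rw [e]
    refine (normSq_sum_le n a _ fun i => by fun_prop).trans ?_
    have hterm : ∀ k ∈ Finset.range n,
        a k ^ 2 * normSq (fun x => (derivative^[j + 1] (leg k)).eval x) ≤
          (2 * (n : ℝ)) ^ 2 * (A * (n : ℝ) ^ (4 * j + 2)) := by
      intro k hk
      have hkn : (k : ℝ) + 1 ≤ n := by exact_mod_cast Finset.mem_range.1 hk
      have h1 : a k ^ 2 ≤ (2 * (n : ℝ)) ^ 2 := by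
        refine sq_le_sq' ?_ ?_ <;> linarith [(abs_le.1 (ha k)).1, (abs_le.1 (ha k)).2]
      have h2 : A * (k : ℝ) ^ (4 * j + 2) ≤ A * (n : ℝ) ^ (4 * j + 2) := by
        gcongr; exact (Finset.mem_range.1 hk).le
      exact mul_le_mul h1 ((ih k).trans h2) (normSq_nonneg _) (by positivity)
    calc _ ≤ (n : ℝ) * ∑ k ∈ Finset.range n, (2 * (n : ℝ)) ^ 2 * (A * (n : ℝ) ^ (4 * j + 2)) := by
          exact mul_le_mul_of_nonneg_left (Finset.sum_le_sum hterm) n.cast_nonneg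
      _ = 4 * A * (n : ℝ) ^ (4 * (j + 1) + 2) := by
          rw [Finset.sum_const, Finset.card_range, nsmul_eq_mul]; ring

/-! ### Derivatives of the remainder -/

/-- The derivative of the remainder is the remainder of the derivative up to two boundary terms
of the truncation. -/
lemma hasDerivAt_legErr {f : ℝ → ℝ} (hf : ContDiff ℝ 1 f) (M : ℕ) (x : ℝ) :
    HasDerivAt (legErr (M + 1) f) (legErr (M + 1) (deriv f) x
      + legCoef (deriv f) M / 2 * (derivative (leg (M + 1))).eval x
      + legCoef (deriv f) (M + 1) / 2 * (derivative (leg M)).eval x) x := by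
  have hfx := (hf.differentiable one_ne_zero x).hasDerivAt
  induction M with
  | zero =>
    rw [legErr_succ, legErr_succ, legErr_zero, legErr_zero]
    simp only [legendreP_eq, leg_zero, zero_add, derivative_leg_one, eval_one, derivative_one,
      eval_zero]
    have := hfx.add_const (-((2 * ((0 : ℕ) : ℝ) + 1) / 2 * legCoef f 0) * 1)
    convert! this using 1
    push_cast
    ring
  | succ M ih =>
    have hP : HasDerivAt (legendreP (M + 1)) ((derivative (leg (M + 1))).eval x) x := by
      rw [legendreP_eq]; exact (leg (M + 1)).hasDerivAt x
    have h := ih.add (hP.const_mul (-((2 * ((M + 1 : ℕ) : ℝ) + 1) / 2 * legCoef f (M + 1))))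
    rw [legErr_succ (M + 1) f]
    refine HasDerivAt.congr_deriv h ?_
    have hr := legCoef_deriv hf M
    rw [legErr_succ (M + 1) (deriv f), derivative_leg, legendreP_eq]
    simp only [eval_add, eval_mul, eval_C]
    push_cast
    linear_combination (-(derivative (leg (M + 1))).eval x / 2) * hr

lemma iteratedDeriv_legErr {m j : ℕ} (hj : j ≤ m) {f : ℝ → ℝ} (hf : ContDiff ℝ (m + 1 : ℕ) f)
    (M : ℕ) : iteratedDeriv (j + 1) (legErr (M + 1) f) = fun x =>
      iteratedDeriv j (legErr (M + 1) (deriv f)) x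
        + legCoef (deriv f) M / 2 * (derivative^[j + 1] (leg (M + 1))).eval x
        + legCoef (deriv f) (M + 1) / 2 * (derivative^[j + 1] (leg M)).eval x := by
  have hd : deriv (legErr (M + 1) f) = fun x => legErr (M + 1) (deriv f) x
      + (C (legCoef (deriv f) M / 2) * derivative (leg (M + 1))
        + C (legCoef (deriv f) (M + 1) / 2) * derivative (leg M)).eval x := by
    ext x
    rw [(hasDerivAt_legErr (contDiff_one_of_succ hf) M x).deriv]
    simp only [eval_add, eval_mul, eval_C]; ring
  have hE : ContDiff ℝ j (legErr (M + 1) (deriv f)) := by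
    refine ((contDiff_deriv_of_succ hf).of_le (by exact_mod_cast hj)).sub ?_
    refine ContDiff.sum fun i _ => contDiff_const.mul ?_
    rw [legendreP_eq]; exact contDiff_eval _ _
  rw [iteratedDeriv_succ', hd]
  ext x
  rw [iteratedDeriv_fun_add hE.contDiffAt (contDiff_eval _ _).contDiffAt, iteratedDeriv_eval,
    iterate_map_add, iterate_derivative_C_mul, iterate_derivative_C_mul]
  simp only [eval_add, eval_mul, eval_C, Function.iterate_succ_apply]
  ring

lemma continuous_iteratedDeriv_legErr {m j : ℕ} (hj : j ≤ m) {f : ℝ → ℝ} (hf : ContDiff ℝ m f)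
    (M : ℕ) : Continuous (iteratedDeriv j (legErr M f)) := by
  refine ContDiff.continuous_iteratedDeriv (n := m) j (hf.sub ?_) (by exact_mod_cast hj)
  refine ContDiff.sum fun i _ => contDiff_const.mul ?_
  rw [legendreP_eq]; exact contDiff_eval _ _

/-- The error estimate for derivatives of order at least one, with the gain of half a power of `M`
over the crude bound `M^{2j-m}`; it follows from the crude bound for `f'`. -/
lemma normSq_iteratedDeriv_step {m j : ℕ} (hj : j ≤ m)
    (hW : ∃ A : ℝ, 0 < A ∧ ∀ (M : ℕ) (f : ℝ → ℝ), ContDiff ℝ m f →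
      ((M : ℝ) + 1) ^ (2 * m) * normSq (iteratedDeriv j (legErr (M + 1) f)) ≤
        A * ((M : ℝ) + 1) ^ (4 * j) * semiSq m (M + 1) f) :
    ∃ A : ℝ, 0 < A ∧ ∀ (M : ℕ) (f : ℝ → ℝ), ContDiff ℝ (m + 1 : ℕ) f →
      ((M : ℝ) + 1) ^ (2 * m + 3) * normSq (iteratedDeriv (j + 1) (legErr (M + 1) f)) ≤
        A * ((M : ℝ) + 1) ^ (4 * (j + 1)) * semiSq (m + 1) (M + 1) f := by
  obtain ⟨A, hA, hW⟩ := hW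
  obtain ⟨B, hB, hL⟩ := normSq_legErr_le m
  obtain ⟨D, hD, hP⟩ := normSq_iterate_derivative_leg j
  refine ⟨3 * (A + 2 * (B * D)), by positivity, fun M f hf => ?_⟩
  have hf' := contDiff_deriv_of_succ hf
  have hfc : Continuous (deriv f) := hf'.continuous
  have hS := semiSq_nonneg (m + 1) (M + 1) f
  have hx1 : (1 : ℝ) ≤ (M : ℝ) + 1 := by linarith [(Nat.cast_nonneg M : (0 : ℝ) ≤ M)]
  have hM0 : (0 : ℝ) ≤ M := Nat.cast_nonneg M
  have hW' := hW M _ hf'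
  have hL' := hL M _ hf'
  rw [semiSq_deriv] at hL'
  have hanti : semiSq m (M + 1) (deriv f) ≤ semiSq (m + 1) (M + 1) f := by
    rw [← semiSq_deriv]; exact semiSq_anti m (Nat.le_succ M) _
  -- The two boundary coefficients are controlled by the remainder of `f'`.
  have hcoef : ∀ n, M ≤ n →
      ((M : ℝ) + 1) ^ (2 * m + 1) * (legCoef (deriv f) n / 2) ^ 2 ≤
        B * semiSq (m + 1) (M + 1) f := by
    intro n hn
    have h1 := legEnergy_le hfc hn
    have hMn : (M : ℝ) ≤ n := by exact_mod_cast hn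
    have h2 : ((M : ℝ) + 1) * (legCoef (deriv f) n / 2) ^ 2 ≤ normSq (legErr M (deriv f)) := by
      refine le_trans ?_ h1
      rw [legEnergy]
      nlinarith [sq_nonneg (legCoef (deriv f) n)]
    calc _ = ((M : ℝ) + 1) ^ (2 * m) * (((M : ℝ) + 1) * (legCoef (deriv f) n / 2) ^ 2) := by ring
      _ ≤ ((M : ℝ) + 1) ^ (2 * m) * normSq (legErr M (deriv f)) := by gcongr
      _ ≤ _ := hL'
  have hterm : ∀ n k, M ≤ n → k ≤ M + 1 → ((M : ℝ) + 1) ^ (2 * m + 3) *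
      normSq (fun x => legCoef (deriv f) n / 2 * (derivative^[j + 1] (leg k)).eval x) ≤
        B * D * ((M : ℝ) + 1) ^ (4 * (j + 1)) * semiSq (m + 1) (M + 1) f := by
    intro n k hn hk
    have hk' : (k : ℝ) ≤ (M : ℝ) + 1 := by exact_mod_cast hk
    have h1 : normSq (fun x => (derivative^[j + 1] (leg k)).eval x) ≤
        D * ((M : ℝ) + 1) ^ (4 * j + 2) := (hP k).trans (by gcongr)
    rw [normSq_const_mul]
    calc _ = ((M : ℝ) + 1) ^ 2 * ((((M : ℝ) + 1) ^ (2 * m + 1) * (legCoef (deriv f) n / 2) ^ 2) *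
          normSq (fun x => (derivative^[j + 1] (leg k)).eval x)) := by ring
      _ ≤ ((M : ℝ) + 1) ^ 2 * ((B * semiSq (m + 1) (M + 1) f) *
          (D * ((M : ℝ) + 1) ^ (4 * j + 2))) := by
        refine mul_le_mul_of_nonneg_left ?_ (by positivity)
        exact mul_le_mul (hcoef n hn) h1 (normSq_nonneg _) (by positivity)
      _ = _ := by ring
  have hmain : ((M : ℝ) + 1) ^ (2 * m + 3) *
      normSq (iteratedDeriv j (legErr (M + 1) (deriv f))) ≤
        A * ((M : ℝ) + 1) ^ (4 * (j + 1)) * semiSq (m + 1) (M + 1) f := by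
    calc _ = ((M : ℝ) + 1) ^ 3 * (((M : ℝ) + 1) ^ (2 * m) *
          normSq (iteratedDeriv j (legErr (M + 1) (deriv f)))) := by ring
      _ ≤ ((M : ℝ) + 1) ^ 4 *
          (A * ((M : ℝ) + 1) ^ (4 * j) * semiSq (m + 1) (M + 1) f) := by
        refine mul_le_mul (pow_le_pow_right₀ hx1 (by norm_num)) (hW'.trans (by gcongr))
          (mul_nonneg (by positivity) (normSq_nonneg _)) (by positivity)
      _ = _ := by ring
  have h3 := normSq_add_three_le (continuous_iteratedDeriv_legErr hj hf' (M + 1))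
    (show Continuous fun x =>
      legCoef (deriv f) M / 2 * (derivative^[j + 1] (leg (M + 1))).eval x by fun_prop)
    (show Continuous fun x =>
      legCoef (deriv f) (M + 1) / 2 * (derivative^[j + 1] (leg M)).eval x by fun_prop)
  rw [iteratedDeriv_legErr hj hf]
  have t1 := hterm M (M + 1) le_rfl le_rfl
  have t2 := hterm (M + 1) M (Nat.le_succ M) (Nat.le_succ M)
  refine (mul_le_mul_of_nonneg_left h3 (by positivity)).trans ?_
  linarith

/-- The crude bound `M^{2j-m}` for derivatives of every order. -/
lemma normSq_iteratedDeriv_le (j : ℕ) : ∀ m, j ≤ m →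
    ∃ A : ℝ, 0 < A ∧ ∀ (M : ℕ) (f : ℝ → ℝ), ContDiff ℝ m f →
      ((M : ℝ) + 1) ^ (2 * m) * normSq (iteratedDeriv j (legErr (M + 1) f)) ≤
        A * ((M : ℝ) + 1) ^ (4 * j) * semiSq m (M + 1) f := by
  induction j with
  | zero =>
    intro m _
    obtain ⟨A, hA, h⟩ := normSq_legErr_le m
    refine ⟨A, hA, fun M f hf => ?_⟩
    have hn := normSq_nonneg (legErr (M + 1) f)
    have h' := h (M + 1) f hf
    simp only [iteratedDeriv_zero, mul_zero, pow_zero, mul_one]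
    refine le_trans ?_ h'
    gcongr
    linarith
  | succ j ih =>
    intro m hm
    obtain ⟨m, rfl⟩ : ∃ k, m = k + 1 := ⟨m - 1, by omega⟩
    obtain ⟨A, hA, h⟩ := normSq_iteratedDeriv_step (by omega) (ih m (by omega))
    refine ⟨A, hA, fun M f hf => le_trans ?_ (h M f hf)⟩
    have hx1 : (1 : ℝ) ≤ (M : ℝ) + 1 := by linarith [(Nat.cast_nonneg M : (0 : ℝ) ≤ M)]
    exact mul_le_mul_of_nonneg_right (pow_le_pow_right₀ hx1 (by omega)) (normSq_nonneg _)

/-- The sharper bounds for all orders `j ≤ r`, weakened to the common right-hand side they have for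
`j = r`. -/
lemma normSq_iteratedDeriv_le_of_le {m r : ℕ} (hr1 : 1 ≤ r) (hrm : r ≤ m) (j : ℕ) (hj : j ≤ r) :
    ∃ A : ℝ, 0 < A ∧ ∀ (M : ℕ) (f : ℝ → ℝ), ContDiff ℝ m f →
      ((M : ℝ) + 1) ^ (2 * m + 1) * normSq (iteratedDeriv j (legErr (M + 1) f)) ≤
        A * ((M : ℝ) + 1) ^ (4 * r) * semiSq m (M + 1) f := by
  cases j with
  | zero =>
    obtain ⟨A, hA, h⟩ := normSq_iteratedDeriv_le 0 m (Nat.zero_le _)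
    refine ⟨A, hA, fun M f hf => ?_⟩
    have hS := semiSq_nonneg m (M + 1) f
    have hx1 : (1 : ℝ) ≤ (M : ℝ) + 1 := by linarith [(Nat.cast_nonneg M : (0 : ℝ) ≤ M)]
    have h' := h M f hf
    simp only [mul_zero, pow_zero, mul_one] at h'
    calc _ = ((M : ℝ) + 1) ^ 1 * (((M : ℝ) + 1) ^ (2 * m) *
          normSq (iteratedDeriv 0 (legErr (M + 1) f))) := by ring
      _ ≤ ((M : ℝ) + 1) ^ (4 * r) * (A * semiSq m (M + 1) f) := by
        refine mul_le_mul (pow_le_pow_right₀ hx1 (by omega)) h'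
          (mul_nonneg (by positivity) (normSq_nonneg _)) (by positivity)
      _ = _ := by ring
  | succ j =>
    obtain ⟨m, rfl⟩ : ∃ k, m = k + 1 := ⟨m - 1, by omega⟩
    obtain ⟨A, hA, h⟩ := normSq_iteratedDeriv_step (j := j) (m := m) (by omega)
      (normSq_iteratedDeriv_le j m (by omega))
    refine ⟨A, hA, fun M f hf => (h M f hf).trans ?_⟩
    have hS := semiSq_nonneg (m + 1) (M + 1) f
    have hx1 : (1 : ℝ) ≤ (M : ℝ) + 1 := by linarith [(Nat.cast_nonneg M : (0 : ℝ) ≤ M)]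
    gcongr

lemma sum_normSq_iteratedDeriv_le {m r : ℕ} (hr1 : 1 ≤ r) (hrm : r ≤ m) (k : ℕ) (hk : k ≤ r + 1) :
    ∃ A : ℝ, 0 < A ∧ ∀ (M : ℕ) (f : ℝ → ℝ), ContDiff ℝ m f →
      ((M : ℝ) + 1) ^ (2 * m + 1) *
          ∑ j ∈ Finset.range k, normSq (iteratedDeriv j (legErr (M + 1) f)) ≤
        A * ((M : ℝ) + 1) ^ (4 * r) * semiSq m (M + 1) f := by
  induction k with
  | zero =>
    refine ⟨1, one_pos, fun M f _ => ?_⟩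
    have hS := semiSq_nonneg m (M + 1) f
    simp only [Finset.range_zero, Finset.sum_empty, mul_zero]
    positivity
  | succ k ih =>
    obtain ⟨A, hA, h⟩ := ih (by omega)
    obtain ⟨B, hB, h'⟩ := normSq_iteratedDeriv_le_of_le hr1 hrm k (by omega)
    refine ⟨A + B, by positivity, fun M f hf => ?_⟩
    rw [Finset.sum_range_succ, mul_add, add_mul, add_mul]
    exact add_le_add (h M f hf) (h' M f hf)

/-- (Equation (19) of the paper, after Canuto et al.)
For `1 ≤ r ≤ m`:
`‖f - L_{M-1}(f)‖_{H^r(-1,1)} ≤ C (M-1)^{2r - 1/2 - m} |f|_{H^{m,M-1}(-1,1)}`,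
where `‖g‖_{H^r(-1,1)} = (Σ_{j=0}^r ‖g^{(j)}‖²_{L²(-1,1)})^{1/2}`. -/
theorem stmt_6 (m r : ℕ) (hm : 1 ≤ m) (hr1 : 1 ≤ r) (hrm : r ≤ m) :
    ∃ C : ℝ, 0 < C ∧ ∀ M : ℕ, 2 ≤ M →
      ∀ f : ℝ → ℝ, ContDiff ℝ m f →
        Real.sqrt (∑ j ∈ Finset.range (r + 1),
            ∫ x in (-1 : ℝ)..1, (iteratedDeriv j (fun t => f t - legTrunc M f t) x) ^ 2)
          ≤ C * ((M : ℝ) - 1) ^ (2 * (r : ℝ) - 1 / 2 - (m : ℝ)) * legSemiNorm m M f := by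
  obtain ⟨A, hA, h⟩ := sum_normSq_iteratedDeriv_le hr1 hrm (r + 1) le_rfl
  refine ⟨Real.sqrt (A * 2 ^ (4 * r)), by positivity, fun M hM f hf => ?_⟩
  obtain ⟨N, rfl⟩ : ∃ k, M = k + 1 := ⟨M - 1, by omega⟩
  have hN : (1 : ℝ) ≤ N := by exact_mod_cast (by omega : 1 ≤ N)
  have hN0 : (0 : ℝ) < N := by linarith
  have hS := semiSq_nonneg m (N + 1) f
  have h := h N f hf
  set T := ∑ j ∈ Finset.range (r + 1), normSq (iteratedDeriv j (legErr (N + 1) f)) with hT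
  have hT0 : 0 ≤ T := Finset.sum_nonneg fun _ _ => normSq_nonneg _
  change Real.sqrt T ≤ _ * _ * Real.sqrt (semiSq m (N + 1) f)
  rw [show ((N + 1 : ℕ) : ℝ) - 1 = N by push_cast; ring]
  set y := (N : ℝ) ^ (2 * (r : ℝ) - 1 / 2 - (m : ℝ)) with hy
  have hy0 : 0 ≤ y := by positivity
  have hy2 : (N : ℝ) ^ (2 * m + 1) * y ^ 2 = (N : ℝ) ^ (4 * r) := by
    rw [hy, ← Real.rpow_natCast _ 2, ← Real.rpow_mul hN0.le, ← Real.rpow_natCast _ (2 * m + 1),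
      ← Real.rpow_natCast _ (4 * r), ← Real.rpow_add hN0]
    congr 1
    push_cast
    ring
  rw [← Real.sqrt_sq hy0, ← Real.sqrt_mul (by positivity), ← Real.sqrt_mul (by positivity)]
  refine Real.sqrt_le_sqrt ?_
  refine le_of_mul_le_mul_left ?_ (by positivity : (0 : ℝ) < (N : ℝ) ^ (2 * m + 1))
  calc (N : ℝ) ^ (2 * m + 1) * T ≤ ((N : ℝ) + 1) ^ (2 * m + 1) * T := by
        gcongr; linarith
    _ ≤ A * ((N : ℝ) + 1) ^ (4 * r) * semiSq m (N + 1) f := h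
    _ ≤ A * (2 * (N : ℝ)) ^ (4 * r) * semiSq m (N + 1) f := by
        gcongr; linarith
    _ = A * 2 ^ (4 * r) * ((N : ℝ) ^ (2 * m + 1) * y ^ 2) * semiSq m (N + 1) f := by
        rw [hy2, mul_pow]; ring
    _ = _ := by ring
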